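/- Let 𝒮 be the set of biquadratic fields K = ℚ(√a, √b) ⊆ ℂ with a, b odd squarefree integers and [K:ℚ] = 4, and let 𝒮_ℰ ⊆ 𝒮 be the subset of those K whose ring of integers possesses a Euclidean ideal in the sense of Lenstra. For X > 0, let 𝒮_ℰ(X) = #{K ∈ 𝒮_ℰ : |Δ_K| ≤ X} and 𝒮(X) = #{K ∈ 𝒮 : |Δ_K| ≤ X}. Then lim_{X → ∞} 𝒮_ℰ(X)/𝒮(X) = 0. -/

import Mathlib

open IntermediateField NumberField Filter
noncomputable section
open scoped Classical
def biquad (d₁ d₂ : ℤ) : IntermediateField ℚ ℂ :=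
  IntermediateField.adjoin ℚ {x : ℂ | x ^ 2 = (d₁ : ℂ) ∨ x ^ 2 = (d₂ : ℂ)}
def biquadFamily : Set (IntermediateField ℚ ℂ) :=
  {K | ∃ a b : ℤ, Odd a ∧ Odd b ∧ Squarefree a ∧ Squarefree b ∧
    Module.finrank ℚ K = 4 ∧ K = biquad a b}
def absDisc (K : IntermediateField ℚ ℂ) : ℕ :=
  if h : FiniteDimensional ℚ K then
    haveI := h
    haveI : NumberField K := ⟨⟩
    (NumberField.discr K).natAbs
  else 0

/-- Lenstra's notion of a Euclidean ideal of a Dedekind domain `R`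
(with fraction field `F`). -/
def IsEuclideanIdeal (R : Type*) [CommRing R] [IsDomain R] [IsDedekindDomain R]
    (F : Type*) [Field F] [Algebra R F] [IsFractionRing R F] (C : Ideal R) : Prop :=
  C ≠ 0 ∧
  ∃ (W : Type) (rel : W → W → Prop) (_ : IsWellOrder W rel) (Ψ : Ideal R → W),
    ∀ I : Ideal R, I ≠ 0 →
      ∀ x : F,
        x ∈ (I : FractionalIdeal (nonZeroDivisors R) F)⁻¹ *
            (C : FractionalIdeal (nonZeroDivisors R) F) →
        x ∉ (C : FractionalIdeal (nonZeroDivisors R) F) →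
        ∃ y ∈ C, ∃ J : Ideal R,
          (J : FractionalIdeal (nonZeroDivisors R) F) =
            FractionalIdeal.spanSingleton (nonZeroDivisors R) (x - algebraMap R F y) *
              (I : FractionalIdeal (nonZeroDivisors R) F) *
              (C : FractionalIdeal (nonZeroDivisors R) F)⁻¹ ∧
          rel (Ψ J) (Ψ I)

/-- The number field `K ⊆ ℂ` admits a Euclidean ideal in the sense of Lenstra. -/
def HasEuclideanIdeal (K : IntermediateField ℚ ℂ) : Prop :=
  ∃ h : FiniteDimensional ℚ K,
    letI : FiniteDimensional ℚ K := h
    letI : NumberField K := ⟨⟩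
    ∃ C : Ideal (𝓞 K), IsEuclideanIdeal (𝓞 K) K C

def countS (X : ℝ) : ℕ :=
  Nat.card {K : IntermediateField ℚ ℂ // K ∈ biquadFamily ∧ (absDisc K : ℝ) ≤ X}

def countSE (X : ℝ) : ℕ :=
  Nat.card {K : IntermediateField ℚ ℂ // K ∈ biquadFamily ∧ HasEuclideanIdeal K ∧
    (absDisc K : ℝ) ≤ X}

theorem euclid_mem_zpowers {R : Type*} [CommRing R] [IsDomain R] [IsDedekindDomain R]
    {F : Type*} [Field F] [Algebra R F] [IsFractionRing R F] {C : Ideal R}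
    (h : IsEuclideanIdeal R F C) :
    ∃ g : ClassGroup R, ∀ x : ClassGroup R, x ∈ Subgroup.zpowers g := by
  obtain ⟨hC, W, rel, hwo, Ψ, H⟩ := h
  have hC' : C ∈ nonZeroDivisors (Ideal R) := mem_nonZeroDivisors_iff_ne_zero.2 hC
  refine ⟨ClassGroup.mk0 ⟨C, hC'⟩, ?_⟩
  have key : ∀ w : W, ∀ I : Ideal R, ∀ hI : I ≠ 0, Ψ I = w →
      ClassGroup.mk0 ⟨I, mem_nonZeroDivisors_iff_ne_zero.2 hI⟩ ∈
        Subgroup.zpowers (ClassGroup.mk0 (⟨C, hC'⟩ : nonZeroDivisors (Ideal R))) := by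
    intro w
    induction w using hwo.toIsWellFounded.wf.induction with
    | _ w ih =>
    intro I hI hw
    have hI0 : (I : FractionalIdeal (nonZeroDivisors R) F) ≠ 0 :=
      FractionalIdeal.coeIdeal_ne_zero.2 hI
    have hC0 : (C : FractionalIdeal (nonZeroDivisors R) F) ≠ 0 :=
      FractionalIdeal.coeIdeal_ne_zero.2 hC
    by_cases hx : ∃ x : F, x ∈ (I : FractionalIdeal (nonZeroDivisors R) F)⁻¹ *
            (C : FractionalIdeal (nonZeroDivisors R) F) ∧
            x ∉ (C : FractionalIdeal (nonZeroDivisors R) F)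
    · obtain ⟨x, hx1, hx2⟩ := hx
      obtain ⟨y, hy, J, hJ, hrel⟩ := H I hI x hx1 hx2
      have hxy : x - algebraMap R F y ≠ 0 := by
        intro h0
        apply hx2
        rw [sub_eq_zero.1 h0]
        exact (FractionalIdeal.mem_coeIdeal _).2 ⟨y, hy, rfl⟩
      have hJ0 : J ≠ 0 := by
        rintro rfl
        have : FractionalIdeal.spanSingleton (nonZeroDivisors R) (x - algebraMap R F y) *
              (I : FractionalIdeal (nonZeroDivisors R) F) *
              (C : FractionalIdeal (nonZeroDivisors R) F)⁻¹ ≠ 0 :=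
          mul_ne_zero (mul_ne_zero (FractionalIdeal.spanSingleton_ne_zero_iff.2 hxy) hI0)
            (inv_ne_zero hC0)
        apply this
        rw [← hJ]
        simp
      have hJm := ih (Ψ J) (hw ▸ hrel) J hJ0 rfl
      have hEq : ClassGroup.mk0 (⟨I, mem_nonZeroDivisors_iff_ne_zero.2 hI⟩ :
            nonZeroDivisors (Ideal R)) =
          ClassGroup.mk0 (⟨J, mem_nonZeroDivisors_iff_ne_zero.2 hJ0⟩ : nonZeroDivisors (Ideal R))
          * ClassGroup.mk0 (⟨C, hC'⟩ : nonZeroDivisors (Ideal R)) := by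
        rw [← map_mul]
        rw [ClassGroup.mk0_eq_mk0_iff_exists_fraction_ring F]
        refine ⟨x - algebraMap R F y, hxy, ?_⟩
        simp only [MulMemClass.mk_mul_mk, FractionalIdeal.coeIdeal_mul]
        rw [hJ]
        field_simp
      rw [hEq]
      exact Subgroup.mul_mem _ hJm (Subgroup.mem_zpowers _)
    · push Not at hx
      have hle : (I : FractionalIdeal (nonZeroDivisors R) F)⁻¹ *
            (C : FractionalIdeal (nonZeroDivisors R) F) ≤ C := hx
      have h1 : (1 : FractionalIdeal (nonZeroDivisors R) F) ≤ I := by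
        have := mul_le_mul_left hle ((C : FractionalIdeal (nonZeroDivisors R) F)⁻¹ * I)
        calc (1 : FractionalIdeal (nonZeroDivisors R) F) = (I : FractionalIdeal (nonZeroDivisors R) F)⁻¹ *
            (C : FractionalIdeal (nonZeroDivisors R) F) * ((C : FractionalIdeal (nonZeroDivisors R) F)⁻¹ * I) := by
              field_simp
          _ ≤ C * ((C : FractionalIdeal (nonZeroDivisors R) F)⁻¹ * I) := this
          _ = I := by field_simp
      have hItop : I = ⊤ := by
        have h2 : ((1 : Ideal R) : FractionalIdeal (nonZeroDivisors R) F) ≤ I := by simpa using h1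
        rw [FractionalIdeal.coeIdeal_le_coeIdeal] at h2
        rw [eq_top_iff]
        simpa using h2
      have : ClassGroup.mk0 (⟨I, mem_nonZeroDivisors_iff_ne_zero.2 hI⟩ :
            nonZeroDivisors (Ideal R)) = 1 := by
        rw [ClassGroup.mk0_eq_one_iff]
        rw [hItop]
        infer_instance
      rw [this]
      exact Subgroup.one_mem _
  intro x
  obtain ⟨I, rfl⟩ := ClassGroup.mk0_surjective x
  exact key _ I.1 (mem_nonZeroDivisors_iff_ne_zero.1 I.2) rfl

/-- units modulo squares are bounded in number by a power of two -/
theorem units_mod_squares (K : Type*) [Field K] [NumberField K] (hK : Module.finrank ℚ K = 4) :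
    ∃ f : (𝓞 K)ˣ → Fin 4 → ZMod 2, ∀ u v, f u = f v → ∃ t : (𝓞 K)ˣ, u * v = t ^ 2 := by
  obtain ⟨g, hg⟩ := IsCyclic.exists_generator (α := NumberField.Units.torsion K)
  have hr : NumberField.Units.rank K ≤ 3 := by
    have := NumberField.InfinitePlace.card_eq_nrRealPlaces_add_nrComplexPlaces K
    have h2 := NumberField.InfinitePlace.card_add_two_mul_card_eq_rank K
    unfold NumberField.Units.rank
    omega
  have h1 : ∀ x : (𝓞 K)ˣ, ∃ (k : ℤ) (e : Fin (NumberField.Units.rank K) → ℤ),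
      x = (g : (𝓞 K)ˣ) ^ k * ∏ i, (NumberField.Units.fundSystem K i) ^ (e i) := by
    intro x
    obtain ⟨⟨ζ, e⟩, h, -⟩ := NumberField.Units.exist_unique_eq_mul_prod K x
    obtain ⟨k, hk⟩ := hg ζ
    refine ⟨k, e, ?_⟩
    rw [h]
    simp [← hk]
  choose k e hke using h1
  refine ⟨fun x i => if h : i.1 < NumberField.Units.rank K then ((e x ⟨i.1, h⟩ : ℤ) : ZMod 2)
    else (k x : ZMod 2), ?_⟩
  intro u v huv
  have hkk : (k u : ZMod 2) = k v := by
    have := congrFun huv ⟨3, by norm_num⟩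
    simpa [show ¬ (3 < NumberField.Units.rank K) by omega] using this
  have hee : ∀ i, (e u i : ZMod 2) = e v i := by
    intro i
    have := congrFun huv ⟨i.1, by omega⟩
    simpa using this
  have hpar : ∀ m n : ℤ, (m : ZMod 2) = n → ∃ t, m + n = 2 * t := by
    intro m n h
    rw [ZMod.intCast_eq_intCast_iff_dvd_sub] at h
    push_cast at h
    obtain ⟨t, ht⟩ := h
    exact ⟨t + m, by linarith⟩
  obtain ⟨s, hs⟩ := hpar _ _ hkk
  choose t ht using fun i => hpar _ _ (hee i)
  refine ⟨(g : (𝓞 K)ˣ) ^ s * ∏ i, (NumberField.Units.fundSystem K i) ^ (t i), ?_⟩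
  conv_lhs => rw [hke u, hke v]
  rw [mul_mul_mul_comm, ← zpow_add, ← Finset.prod_mul_distrib, hs, mul_pow, ← Finset.prod_pow]
  congr 1
  · rw [mul_comm, zpow_mul, zpow_ofNat]
  · refine Finset.prod_congr rfl fun i _ => ?_
    rw [← zpow_add, ht, mul_comm, zpow_mul, zpow_ofNat]

/-- `K` is the biquadratic field generated by `α = √a`, `β = √b`. -/
structure BQ (K : Type*) [Field K] [NumberField K] (a b : ℤ) (α β : K) : Prop where
  ha : α ^ 2 = (a : K)
  hb : β ^ 2 = (b : K)
  span : ∀ z : K, ∃ x y w v : ℚ, z = x + y * α + w * β + v * (α * β)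
  fin : Module.finrank ℚ K = 4

namespace BQ
variable {K : Type*} [Field K] [NumberField K] {a b : ℤ} {α β : K}

theorem symm (h : BQ K a b α β) : BQ K b a β α := by
  refine ⟨h.hb, h.ha, fun z => ?_, h.fin⟩
  obtain ⟨x, y, w, v, rfl⟩ := h.span z
  exact ⟨x, w, y, v, by ring⟩

theorem indep (h : BQ K a b α β) {x y w v : ℚ}
    (h0 : (x : K) + y * α + w * β + v * (α * β) = 0) : x = 0 ∧ y = 0 ∧ w = 0 ∧ v = 0 := by
  have hli : LinearIndependent ℚ ![(1 : K), α, β, α * β] := by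
    apply linearIndependent_of_top_le_span_of_card_eq_finrank
    · intro z _
      obtain ⟨x, y, w, v, rfl⟩ := h.span z
      rw [Submodule.mem_span_range_iff_exists_fun]
      refine ⟨![x, y, w, v], ?_⟩
      simp [Fin.sum_univ_four, Algebra.smul_def]
    · simp [h.fin]
  rw [Fintype.linearIndependent_iff] at hli
  have := hli ![x, y, w, v] (by simpa [Fin.sum_univ_four, Algebra.smul_def] using h0)
  exact ⟨this 0, this 1, this 2, this 3⟩

theorem indep_iff (h : BQ K a b α β) {x y w v x' y' w' v' : ℚ}
    (h0 : (x : K) + y * α + w * β + v * (α * β) = x' + y' * α + w' * β + v' * (α * β)) :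
    x = x' ∧ y = y' ∧ w = w' ∧ v = v' := by
  have := h.indep (x := x - x') (y := y - y') (w := w - w') (v := v - v')
    (by push_cast; linear_combination h0)
  simpa [sub_eq_zero] using this

theorem a_not_sq (h : BQ K a b α β) (r : ℚ) : (a : ℚ) ≠ r ^ 2 := by
  intro hr
  have h1 : (α - r) * (α + r) = 0 := by
    have : (a : K) = (r : K) ^ 2 := by exact_mod_cast congrArg (fun q : ℚ => (q : K)) hr
    linear_combination h.ha + this
  rcases mul_eq_zero.1 h1 with h2 | h2
  · have := h.indep (x := -r) (y := 1) (w := 0) (v := 0) (by push_cast; linear_combination h2)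
    simpa using this.2.1
  · have := h.indep (x := r) (y := 1) (w := 0) (v := 0) (by push_cast; linear_combination h2)
    simpa using this.2.1

theorem a_ne (h : BQ K a b α β) : a ≠ 0 := by
  have := h.a_not_sq 0
  intro h0; apply this; simp [h0]

theorem α_ne (h : BQ K a b α β) : α ≠ 0 := by
  intro h0
  have := h.ha
  rw [h0] at this
  apply h.a_ne
  have : (a : K) = 0 := by rw [← this]; simp
  exact_mod_cast this

/-- third subfield: `b ≠ a r²` -/
theorem ab_not_sq (h : BQ K a b α β) (r : ℚ) : (b : ℚ) ≠ a * r ^ 2 := by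
  intro hr
  have h1 : (β - r * α) * (β + r * α) = 0 := by
    have : (b : K) = a * (r : K) ^ 2 := by exact_mod_cast congrArg (fun q : ℚ => (q : K)) hr
    linear_combination h.hb + this - r ^ 2 * h.ha
  rcases mul_eq_zero.1 h1 with h2 | h2
  · have := h.indep (x := 0) (y := -r) (w := 1) (v := 0) (by push_cast; linear_combination h2)
    simpa using this.2.2.1
  · have := h.indep (x := 0) (y := r) (w := 1) (v := 0) (by push_cast; linear_combination h2)
    simpa using this.2.2.1

/-- rational numbers which are squares in `K` -/
theorem sq_in (h : BQ K a b α β) {d : ℚ} {z : K} (hz : z ^ 2 = (d : K)) :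
    ∃ r : ℚ, d = r ^ 2 ∨ d = a * r ^ 2 ∨ d = b * r ^ 2 ∨ d = a * b * r ^ 2 := by
  obtain ⟨x, y, w, v, rfl⟩ := h.span z
  obtain ⟨h1, h2, h3, h4⟩ := h.indep_iff (x := x ^ 2 + a * y ^ 2 + b * w ^ 2 + a * b * v ^ 2)
    (y := 2 * (x * y + b * w * v)) (w := 2 * (x * w + a * y * v)) (v := 2 * (x * v + y * w))
    (x' := d) (y' := 0) (w' := 0) (v' := 0) (by
      push_cast
      linear_combination hz - (y ^ 2 + 2 * y * v * β + v ^ 2 * β ^ 2) * h.ha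
        - (w ^ 2 + 2 * w * v * α + v ^ 2 * a) * h.hb)
  have hb0 : (b : ℚ) ≠ 0 := by exact_mod_cast h.symm.a_ne
  have ha0 : (a : ℚ) ≠ 0 := by exact_mod_cast h.a_ne
  by_cases hx : x = 0
  · subst hx
    have e1 : w * v = 0 := by
      have : (b : ℚ) * (w * v) = 0 := by linarith
      simpa [hb0] using this
    have e2 : y * v = 0 := by
      have : (a : ℚ) * (y * v) = 0 := by linarith
      simpa [ha0] using this
    have e3 : y * w = 0 := by linarith
    by_cases hv : v = 0
    · subst hv
      rcases mul_eq_zero.1 e3 with rfl | rfl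
      · exact ⟨w, by right; right; left; linarith⟩
      · exact ⟨y, by right; left; linarith⟩
    · have hw : w = 0 := by simpa [hv] using e1
      have hy : y = 0 := by simpa [hv] using e2
      subst hw hy
      exact ⟨v, by right; right; right; linarith⟩
  · have hv : v = 0 := by
      by_contra hv
      have : v * (x ^ 2 - b * w ^ 2) = 0 := by linear_combination x / 2 * h4 - w / 2 * h2
      have h5 : x ^ 2 - b * w ^ 2 = 0 := by simpa [hv] using this
      by_cases hw : w = 0
      · subst hw
        apply hx
        simpa using h5
      · apply h.symm.a_not_sq (x / w)
        field_simp
        linarith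
    subst hv
    have hy : y = 0 := by
      have : x * y = 0 := by linarith
      simpa [hx] using this
    have hw : w = 0 := by
      have : x * w = 0 := by linarith
      simpa [hx] using this
    subst hy hw
    exact ⟨x, by left; linarith⟩

end BQ

open Polynomial in
theorem trace_sqrt {F L : Type*} [Field F] [Field L] [Algebra F L] [FiniteDimensional F L]
    {z : L} {c : F} (hz : z ^ 2 = algebraMap F L c) (hn : ∀ r : F, algebraMap F L r ≠ z) :
    Algebra.trace F L z = 0 := by
  have hirr : Irreducible (X ^ 2 - C c : F[X]) := by
    rw [X_pow_sub_C_irreducible_iff_of_prime Nat.prime_two]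
    intro r hr
    have : (z - algebraMap F L r) * (z + algebraMap F L r) = 0 := by
      rw [← hr] at hz
      rw [map_pow] at hz
      linear_combination hz
    rcases mul_eq_zero.1 this with h | h
    · exact hn r (by linear_combination -h)
    · exact hn (-r) (by rw [map_neg]; linear_combination -h)
  have hmin : X ^ 2 - C c = minpoly F z :=
    minpoly.eq_of_irreducible_of_monic hirr (by simp [hz]) (monic_X_pow_sub_C c (by norm_num))
  rw [trace_eq_finrank_mul_minpoly_nextCoeff, ← hmin]
  have : (X ^ 2 - C c : F[X]).nextCoeff = 0 := by
    rw [nextCoeff_of_natDegree_pos (by simp)]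
    simp
  simp [this]

theorem eq_of_mul_sq {d e : ℕ} (hd : Squarefree d) (he : Squarefree e) {r : ℚ}
    (h : (d : ℚ) * e = r ^ 2) : d = e := by
  have h1 : IsSquare (((d * e : ℕ) : ℚ)) := ⟨r, by push_cast; rw [h]; ring⟩
  rw [Rat.isSquare_natCast_iff] at h1
  obtain ⟨m, hm⟩ := h1
  have hdm : d ∣ m := by
    rw [← hd.dvd_pow_iff_dvd (n := 2) (by norm_num), sq, ← hm]
    exact Dvd.intro _ rfl
  obtain ⟨k, rfl⟩ := hdm
  have hd0 : d ≠ 0 := hd.ne_zero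
  have : e = d * (k * k) := by
    have : d * e = d * (d * (k * k)) := by rw [hm]; ring
    exact Nat.eq_of_mul_eq_mul_left (Nat.pos_of_ne_zero hd0) this
  have hk : IsUnit k := he k ⟨d, by rw [this]; ring⟩
  rw [Nat.isUnit_iff] at hk
  subst hk
  simpa using this.symm

theorem ideal_sq {R : Type*} [CommRing R] {d e : ℤ} (hc : IsCoprime d e) {α : R}
    (hα : α ^ 2 = ((d * e : ℤ) : R)) :
    Ideal.span {(d : R), α} * Ideal.span {(d : R), α} = Ideal.span {(d : R)} := by
  rw [Ideal.span_pair_mul_span_pair]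
  apply le_antisymm
  · rw [Ideal.span_le]
    intro x hx
    simp only [Set.mem_insert_iff, Set.mem_singleton_iff] at hx
    rw [SetLike.mem_coe, Ideal.mem_span_singleton]
    rcases hx with rfl | rfl | rfl | rfl
    · exact Dvd.intro _ rfl
    · exact Dvd.intro _ rfl
    · exact Dvd.intro_left _ rfl
    · rw [← sq, hα]; push_cast; exact Dvd.intro _ rfl
  · rw [Ideal.span_le, Set.singleton_subset_iff, SetLike.mem_coe]
    obtain ⟨u, v, huv⟩ := hc
    have : (d : R) = (u : R) * ((d : R) * d) + (v : R) * (α * α) := by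
      have h2 : ((u * d + v * e : ℤ) : R) = 1 := by rw [huv]; simp
      push_cast at h2
      rw [← sq α, hα]
      push_cast
      linear_combination -(d : R) * h2
    have hm : (u : R) * ((d : R) * d) + (v : R) * (α * α) ∈
        Ideal.span {(d : R) * d, (d : R) * α, α * d, α * α} := by
     apply Ideal.add_mem
     · apply Ideal.mul_mem_left
       apply Ideal.subset_span
       simp
     · apply Ideal.mul_mem_left
       apply Ideal.subset_span
       simp
    rwa [← this] at hm

theorem BQ.card_divisors_le {K : Type*} [Field K] [NumberField K] {a b : ℤ} {α β : K}
    (h : BQ K a b α β) (ha : Squarefree a)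
    (hcyc : ∃ g : ClassGroup (𝓞 K), ∀ x : ClassGroup (𝓞 K), x ∈ Subgroup.zpowers g) :
    a.natAbs.divisors.card ≤ 4 * 16 * 2 := by
  have hαi : IsIntegral ℤ α := by
    refine IsIntegral.of_pow (n := 2) (by norm_num) ?_
    rw [h.ha]
    exact isIntegral_algebraMap (R := ℤ) (A := K) (x := a)
  obtain ⟨α', hα'⟩ : ∃ α' : 𝓞 K, algebraMap (𝓞 K) K α' = α := ⟨⟨α, hαi⟩, rfl⟩
  have hsq : α' ^ 2 = (a : 𝓞 K) := by
    apply FaithfulSMul.algebraMap_injective (𝓞 K) K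
    rw [map_pow, hα', h.ha]
    simp
  have hsfn : Squarefree a.natAbs := Int.squarefree_natAbs.2 ha
  let I : ℕ → Ideal (𝓞 K) := fun d => Ideal.span {((d : ℤ) : 𝓞 K), α'}
  have hI2 : ∀ d ∈ a.natAbs.divisors, I d * I d = Ideal.span {((d : ℤ) : 𝓞 K)} := by
    intro d hd
    have hda : (d : ℤ) ∣ a := Int.natCast_dvd.2 (Nat.dvd_of_mem_divisors hd)
    obtain ⟨e, he⟩ := hda
    have hc : IsCoprime (d : ℤ) e := by
      rw [he, squarefree_mul_iff] at ha
      exact ha.1.isCoprime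
    exact ideal_sq hc (by rw [hsq, he])
  have hd0 : ∀ d ∈ a.natAbs.divisors, ((d : ℤ) : 𝓞 K) ≠ 0 := by
    intro d hd
    have := (Nat.pos_of_mem_divisors hd).ne'
    exact_mod_cast this
  have hI0 : ∀ d ∈ a.natAbs.divisors, I d ≠ 0 := by
    intro d hd h0
    have := hI2 d hd
    rw [h0, zero_mul] at this
    exact hd0 d hd (Ideal.span_singleton_eq_bot.1 this.symm)
  let cl : ℕ → ClassGroup (𝓞 K) := fun d =>
    if hd : I d ≠ 0 then ClassGroup.mk0 ⟨I d, mem_nonZeroDivisors_iff_ne_zero.2 hd⟩ else 1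
  have hcl2 : ∀ d ∈ a.natAbs.divisors, cl d ^ 2 = 1 := by
    intro d hd
    simp only [cl, dif_pos (hI0 d hd)]
    rw [sq, ← map_mul]
    simp only [MulMemClass.mk_mul_mk]
    rw [ClassGroup.mk0_eq_one_iff]
    rw [hI2 d hd]
    exact ⟨⟨_, rfl⟩⟩
  have : IsCyclic (ClassGroup (𝓞 K)) := ⟨hcyc⟩
  let T : Finset (ClassGroup (𝓞 K)) := Finset.univ.filter fun g => g ^ 2 = 1
  have hT : T.card ≤ 2 := IsCyclic.card_pow_eq_one_le (by norm_num)
  obtain ⟨f, hf⟩ := units_mod_squares K h.fin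
  refine le_trans (Finset.card_le_mul_card_image_of_maps_to (f := cl) (t := T) (fun d hd => by
    simpa [T] using hcl2 d hd) (4 * 16) ?_) (Nat.mul_le_mul_left _ hT)
  intro c hc
  rcases (a.natAbs.divisors.filter fun d => cl d = c).eq_empty_or_nonempty with he | ⟨d0, hd0m⟩
  · rw [he]; simp
  obtain ⟨hd0d, hd0c⟩ := Finset.mem_filter.1 hd0m
  -- principal generators
  have hex : ∀ d ∈ a.natAbs.divisors.filter (fun d => cl d = c), ∃ (z : 𝓞 K) (u : (𝓞 K)ˣ),
      z ^ 2 * u = ((d : ℤ) : 𝓞 K) * ((d0 : ℤ) : 𝓞 K) := by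
    intro d hd
    obtain ⟨hdd, hdc⟩ := Finset.mem_filter.1 hd
    have h1 : cl d * cl d0 = 1 := by rw [hdc, ← hd0c, ← sq, hcl2 d0 hd0d]
    simp only [cl, dif_pos (hI0 d hdd), dif_pos (hI0 d0 hd0d)] at h1
    rw [← map_mul] at h1
    simp only [MulMemClass.mk_mul_mk] at h1
    rw [ClassGroup.mk0_eq_one_iff] at h1
    obtain ⟨z, hz⟩ := h1.principal
    have hz' : I d * I d0 = Ideal.span {z} := hz
    have h2 : Ideal.span {z ^ 2} = Ideal.span {((d : ℤ) : 𝓞 K) * ((d0 : ℤ) : 𝓞 K)} := by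
      rw [← Ideal.span_singleton_pow, ← hz', ← Ideal.span_singleton_mul_span_singleton,
        ← hI2 d hdd, ← hI2 d0 hd0d]
      ring
    rw [Ideal.span_singleton_eq_span_singleton] at h2
    obtain ⟨u, hu⟩ := h2
    exact ⟨z, u, hu⟩
  choose! z u hzu using hex
  have hcard : (Finset.univ : Finset (Fin 4 → ZMod 2)).card = 16 := by
    simp [ZMod.card]
  rw [← hcard]
  refine Finset.card_le_mul_card_image_of_maps_to (f := fun d => f (u d)) (fun d hd => by simp) 4 ?_
  intro c2 _
  set S := (a.natAbs.divisors.filter (fun d => cl d = c)).filter (fun d => f (u d) = c2) with hS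
  rcases S.eq_empty_or_nonempty with he | ⟨d1, hd1m⟩
  · rw [he]; simp
  obtain ⟨hd1d, hd1c⟩ := Finset.mem_filter.1 hd1m
  have hsqr : ∀ d ∈ S, ∃ i : Fin 4, ∃ r : ℚ, (d : ℚ) * d1 =
      (![1, (a : ℚ), b, a * b] i) * r ^ 2 := by
    intro d hd
    obtain ⟨hdd, hdc⟩ := Finset.mem_filter.1 hd
    obtain ⟨t, ht⟩ := hf (u d) (u d1) (by rw [hdc, hd1c])
    have e1 := hzu d hdd
    have e2 := hzu d1 hd1d
    have ht' : (u d : 𝓞 K) * (u d1 : 𝓞 K) = (t : 𝓞 K) ^ 2 := by exact_mod_cast congrArg Units.val ht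
    have e3 : (z d * z d1 * t) ^ 2 = ((d : ℤ) : 𝓞 K) * ((d1 : ℤ) : 𝓞 K) * ((d0 : ℤ) : 𝓞 K) ^ 2 := by
      linear_combination (u d1) * (z d1) ^ 2 * e1 + ((d : ℤ) : 𝓞 K) * ((d0 : ℤ) : 𝓞 K) * e2
        - (z d) ^ 2 * (z d1) ^ 2 * ht'
    have e4 := congrArg (fun q : 𝓞 K => (q : K)) e3
    push_cast at e4
    have hd0K : (d0 : K) ≠ 0 := by
      have := (Nat.pos_of_mem_divisors hd0d).ne'
      exact_mod_cast this
    obtain ⟨r, hr⟩ := h.sq_in (d := (d : ℚ) * d1)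
      (z := (algebraMap (𝓞 K) K (z d)) * (algebraMap (𝓞 K) K (z d1)) *
        (algebraMap (𝓞 K) K t) / d0) (by
        push_cast
        rw [div_pow, div_eq_iff (pow_ne_zero 2 hd0K)]
        simpa using e4)
    rcases hr with hr | hr | hr | hr
    · exact ⟨0, r, by rw [hr]; simp⟩
    · exact ⟨1, r, by rw [hr]; simp⟩
    · exact ⟨2, r, by rw [hr]; simp⟩
    · exact ⟨3, r, by rw [hr]; simp⟩
  choose! i r hir using hsqr
  have : S.card ≤ (Finset.univ : Finset (Fin 4)).card := by
    apply Finset.card_le_card_of_injOn i (fun _ _ => by simp)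
    intro d hd d' hd' hii
    have hd := Finset.mem_coe.1 hd
    have hd' := Finset.mem_coe.1 hd'
    have hdd := (Finset.mem_filter.1 (Finset.mem_filter.1 hd).1).1
    have hdd' := (Finset.mem_filter.1 (Finset.mem_filter.1 hd').1).1
    have hd1' := (Finset.mem_filter.1 hd1d).1
    have hd1q : (d1 : ℚ) ≠ 0 := by
      have := (Nat.pos_of_mem_divisors hd1').ne'
      exact_mod_cast this
    have e1 := hir d hd
    have e2 := hir d' hd'
    rw [← hii] at e2
    refine eq_of_mul_sq (hsfn.squarefree_of_dvd (Nat.dvd_of_mem_divisors hdd))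
      (hsfn.squarefree_of_dvd (Nat.dvd_of_mem_divisors hdd'))
      (r := (![1, (a : ℚ), b, a * b] (i d)) * r d * r d' / d1) ?_
    rw [div_pow, eq_div_iff (pow_ne_zero 2 hd1q)]
    linear_combination (d' * d1 : ℚ) * e1 + (![1, (a : ℚ), b, a * b] (i d)) * r d ^ 2 * e2
  simpa using this

theorem int_of_mul_sq {a : ℤ} (ha : Squarefree a) {q : ℚ} {N : ℤ} (h : (a : ℚ) * q ^ 2 = N) :
    ∃ m : ℤ, q = m := by
  have hd : (q.den : ℚ) ≠ 0 := by exact_mod_cast q.den_ne_zero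
  have h1 : a * q.num ^ 2 = N * (q.den : ℤ) ^ 2 := by
    have : (a : ℚ) * q.num ^ 2 = N * (q.den : ℚ) ^ 2 := by
      rw [← h]
      nth_rewrite 2 [← Rat.num_div_den q]
      field_simp
    exact_mod_cast this
  have hc : IsCoprime ((q.den : ℤ) ^ 2) (q.num ^ 2) := by
    apply IsCoprime.pow
    rw [Int.isCoprime_iff_nat_coprime]
    simpa using q.reduced.symm
  have h2 : (q.den : ℤ) ^ 2 ∣ a := hc.dvd_of_dvd_mul_right (Dvd.intro_left _ h1.symm)
  have h3 : IsUnit (q.den : ℤ) := ha _ (by rwa [← sq])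
  have h4 : q.den = 1 := by simpa using Int.isUnit_iff_natAbs_eq.1 h3
  exact ⟨q.num, by rw [Rat.den_eq_one_iff] at h4; exact h4.symm⟩

namespace BQ
variable {K : Type*} [Field K] [NumberField K] {a b : ℤ} {α β : K}

theorem trace_eq (h : BQ K a b α β) (x y w v : ℚ) :
    Algebra.trace ℚ K (x + y * α + w * β + v * (α * β)) = 4 * x := by
  have t1 : Algebra.trace ℚ K α = 0 := by
    refine trace_sqrt (c := (a : ℚ)) (by simpa using h.ha) fun r hr => ?_
    have := h.indep (x := r) (y := -1) (w := 0) (v := 0)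
      (by rw [← hr]; simp)
    simpa using this.2.1
  have t2 : Algebra.trace ℚ K β = 0 := by
    refine trace_sqrt (c := (b : ℚ)) (by simpa using h.hb) fun r hr => ?_
    have := h.indep (x := r) (y := 0) (w := -1) (v := 0)
      (by rw [← hr]; simp)
    simpa using this.2.2.1
  have t3 : Algebra.trace ℚ K (α * β) = 0 := by
    refine trace_sqrt (c := (a * b : ℚ)) (by rw [mul_pow, h.ha, h.hb]; simp) fun r hr => ?_
    have := h.indep (x := r) (y := 0) (w := 0) (v := -1)
      (by rw [← hr]; simp)
    simpa using this.2.2.2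
  have e : (x : K) + y * α + w * β + v * (α * β) =
      algebraMap ℚ K x + y • α + w • β + v • (α * β) := by
    simp [Algebra.smul_def]
  rw [e, map_add, map_add, map_add, map_smul, map_smul, map_smul, t1, t2, t3,
    Algebra.trace_algebraMap, h.fin]
  simp

theorem int_trace (h : BQ K a b α β) {x y w v : ℚ}
    (hz : IsIntegral ℤ ((x : K) + y * α + w * β + v * (α * β))) : ∃ m : ℤ, 4 * x = m := by
  have := Algebra.isIntegral_trace (R := ℤ) (L := ℚ) hz
  rw [h.trace_eq] at this
  obtain ⟨m, hm⟩ := IsIntegrallyClosed.isIntegral_iff.1 this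
  exact ⟨m, by simpa using hm.symm⟩

theorem coord_int (h : BQ K a b α β) (ha : Squarefree a) {x y w v : ℚ}
    (hz : IsIntegral ℤ ((x : K) + y * α + w * β + v * (α * β))) : ∃ m : ℤ, 4 * y = m := by
  let F := ℚ⟮α⟯
  have hαF : α ∈ F := IntermediateField.mem_adjoin_simple_self ℚ α
  have hαi : IsIntegral ℚ α := Algebra.IsIntegral.isIntegral α
  have hfin : Module.finrank ℚ F ≤ 2 := by
    rw [IntermediateField.adjoin.finrank hαi]
    have hm : Polynomial.Monic (Polynomial.X ^ 2 - Polynomial.C (a : ℚ)) :=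
      Polynomial.monic_X_pow_sub_C _ (by norm_num)
    have := minpoly.min ℚ α hm (by simp [h.ha])
    have h2 := Polynomial.natDegree_le_natDegree this
    rwa [Polynomial.natDegree_X_pow_sub_C] at h2
  have hβF : β ∉ F := by
    intro hβ
    have htop : F = ⊤ := by
      rw [eq_top_iff]
      intro z _
      obtain ⟨x, y, w, v, rfl⟩ := h.span z
      have hq : ∀ q : ℚ, (q : K) ∈ F := fun q => by simp
      exact F.add_mem (F.add_mem (F.add_mem (hq _) (F.mul_mem (hq _) hαF))
        (F.mul_mem (hq _) hβ)) (F.mul_mem (hq _) (F.mul_mem hαF hβ))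
    have : Module.finrank ℚ F = 4 := by
      rw [htop, IntermediateField.finrank_top', h.fin]
    omega
  let α' : F := ⟨α, hαF⟩
  have hmul := Module.finrank_mul_finrank ℚ F K
  rw [h.fin] at hmul
  have hk : Module.finrank F K ∣ 4 := Dvd.intro_left _ hmul
  obtain ⟨k, hk⟩ := hk
  have htβ : Algebra.trace F K β = 0 := by
    refine trace_sqrt (c := (b : F)) (by rw [h.hb]; simp) fun r hr => ?_
    apply hβF
    rw [← hr]
    exact r.2
  have htr : Algebra.trace F K ((x : K) + y * α + w * β + v * (α * β)) =
      Module.finrank F K • ((x : F) + y * α') := by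
    have e : (x : K) + y * α + w * β + v * (α * β) =
        algebraMap F K ((x : F) + y * α') + ((w : F) + v * α') • β := by
      have : algebraMap F K α' = α := rfl
      rw [Algebra.smul_def]
      simp only [map_add, map_mul, this, map_ratCast]
      ring
    rw [e, map_add, map_smul, htβ, Algebra.trace_algebraMap]
    simp
  have hint := Algebra.isIntegral_trace (R := ℤ) (L := F) hz
  rw [htr] at hint
  have hint2 : IsIntegral ℤ ((4 : F) * ((x : F) + y * α')) := by
    have h4 : (4 : F) = (k : F) * (Module.finrank F K : F) := by
      have : ((4 : ℕ) : F) = ((Module.finrank F K * k : ℕ) : F) := by rw [← hk]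
      push_cast at this
      rw [this, mul_comm]
    rw [h4, mul_assoc]
    refine IsIntegral.mul (isIntegral_natCast k) ?_
    rwa [← nsmul_eq_mul]
  have hint3 : IsIntegral ℤ ((4 : K) * ((x : K) + y * α)) := by
    have := hint2.map (IsScalarTower.toAlgHom ℤ F K)
    have hh : algebraMap F K α' = α := rfl
    rw [IsScalarTower.toAlgHom_apply] at this
    simpa only [map_mul, map_add, hh, map_ratCast, map_ofNat] using this
  obtain ⟨m, hm⟩ := h.int_trace hz
  have hm' : (4 : K) * x = (m : K) := by exact_mod_cast congrArg (fun q : ℚ => (q : K)) hm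
  have hint4 : IsIntegral ℤ ((4 : K) * y * α) := by
    have : (4 : K) * y * α = (4 : K) * ((x : K) + y * α) - (m : K) := by rw [← hm']; ring
    rw [this]
    exact hint3.sub (isIntegral_intCast m)
  have hint5 := hint4.pow 2
  have e : ((4 : K) * y * α) ^ 2 = algebraMap ℚ K (a * (4 * y) ^ 2) := by
    rw [mul_pow, h.ha]; simp; ring
  rw [e, isIntegral_algebraMap_iff (R := ℤ) (FaithfulSMul.algebraMap_injective ℚ K)] at hint5
  obtain ⟨N, hN⟩ := IsIntegrallyClosed.isIntegral_iff.1 hint5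
  exact int_of_mul_sq ha (N := N) (by simpa using hN.symm)

theorem α_int (h : BQ K a b α β) : IsIntegral ℤ α := by
  refine IsIntegral.of_pow (n := 2) (by norm_num) ?_
  rw [h.ha]
  exact isIntegral_intCast a

theorem norm_α (h : BQ K a b α β) {α' : 𝓞 K} (hα : algebraMap (𝓞 K) K α' = α) :
    (Algebra.norm ℤ α').natAbs = a.natAbs ^ 2 := by
  have hsq : α' ^ 2 = algebraMap ℤ (𝓞 K) a := by
    apply FaithfulSMul.algebraMap_injective (𝓞 K) K
    rw [map_pow, hα, h.ha]
    simp
  have h1 := congrArg (Algebra.norm ℤ) hsq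
  rw [map_pow, Algebra.norm_algebraMap, NumberField.RingOfIntegers.rank, h.fin] at h1
  have h2 := congrArg Int.natAbs h1
  rw [Int.natAbs_pow, Int.natAbs_pow] at h2
  have : (Algebra.norm ℤ α').natAbs ^ 2 = (a.natAbs ^ 2) ^ 2 := by rw [h2]; ring
  exact Nat.pow_left_injective (n := 2) (by norm_num) this

theorem sq_dvd_discr (h : BQ K a b α β) (ha : Squarefree a) :
    a.natAbs ^ 2 ∣ (NumberField.discr K).natAbs := by
  obtain ⟨α', hα'⟩ : ∃ α' : 𝓞 K, algebraMap (𝓞 K) K α' = α := ⟨⟨α, h.α_int⟩, rfl⟩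
  have hα0 : α' ≠ 0 := by
    rintro rfl
    apply h.α_ne
    rw [← hα']; simp
  rw [← h.norm_α hα', ← NumberField.absNorm_differentIdeal K (𝓞 K), ← Ideal.absNorm_span_singleton]
  apply Ideal.absNorm_dvd_absNorm_of_le
  rw [differentialIdeal_le_iff (K := ℚ) (L := K) (by simpa using hα0)]
  rintro _ ⟨z, hz, rfl⟩
  rw [FractionalIdeal.coeIdeal_span_singleton, FractionalIdeal.spanSingleton_inv] at hz
  obtain ⟨y, hy⟩ := (FractionalIdeal.mem_spanSingleton _).1 hz
  rw [hα', Algebra.smul_def] at hy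
  have hyi : IsIntegral ℤ (algebraMap (𝓞 K) K y) := y.2
  obtain ⟨x0, y0, w0, v0, he⟩ := h.span (algebraMap (𝓞 K) K y)
  rw [he] at hyi
  obtain ⟨m, hm⟩ := h.coord_int ha hyi
  have haK : (a : K) ≠ 0 := by exact_mod_cast h.a_ne
  have hz' : z = (y0 : ℚ) + (x0 / a : ℚ) * α + (v0 : ℚ) * β + (w0 / a : ℚ) * (α * β) := by
    rw [← hy, he]
    have := h.α_ne
    push_cast
    field_simp
    linear_combination -(x0 + w0 * β) * h.ha
  change (Algebra.trace ℚ K) z ∈ (1 : Submodule ℤ ℚ)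
  rw [hz', h.trace_eq, hm]
  exact Submodule.mem_one.2 ⟨m, by simp⟩

theorem discr_le (h : BQ K a b α β) :
    (NumberField.discr K).natAbs ≤ 256 * a.natAbs ^ 2 * b.natAbs ^ 2 := by
  obtain ⟨α', hα'⟩ : ∃ α' : 𝓞 K, algebraMap (𝓞 K) K α' = α := ⟨⟨α, h.α_int⟩, rfl⟩
  obtain ⟨β', hβ'⟩ : ∃ β' : 𝓞 K, algebraMap (𝓞 K) K β' = β := ⟨⟨β, h.symm.α_int⟩, rfl⟩
  have hmem : 4 * α' * β' ∈ differentIdeal ℤ (𝓞 K) := by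
    have : ((4 * α' * β' : 𝓞 K) : K) ∈
        (differentIdeal ℤ (𝓞 K) : FractionalIdeal (nonZeroDivisors (𝓞 K)) K) := by
      rw [coeIdeal_differentIdeal ℤ ℚ K (𝓞 K), FractionalIdeal.mem_inv_iff (by simp)]
      intro z hz
      rw [FractionalIdeal.mem_dual (by simp)] at hz
      have hz' : ∀ t : 𝓞 K, ∃ m : ℤ, Algebra.trace ℚ K (z * algebraMap (𝓞 K) K t) = m := by
        intro t
        obtain ⟨m, hm⟩ := hz (algebraMap (𝓞 K) K t) (FractionalIdeal.mem_one_iff _ |>.2 ⟨t, rfl⟩)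
        exact ⟨m, by rw [← Algebra.traceForm_apply, ← hm]; simp⟩
      obtain ⟨x, y, w, v, rfl⟩ := h.span z
      obtain ⟨m1, h1⟩ := hz' 1
      obtain ⟨m2, h2⟩ := hz' α'
      obtain ⟨m3, h3⟩ := hz' β'
      obtain ⟨m4, h4⟩ := hz' (α' * β')
      rw [map_one, mul_one, h.trace_eq] at h1
      rw [hα', show ((x : K) + y * α + w * β + v * (α * β)) * α =
        ((a * y : ℚ) : K) + (x : ℚ) * α + ((a * v : ℚ) : K) * β + (w : ℚ) * (α * β) by
          push_cast; linear_combination (y + v * β) * h.ha, h.trace_eq] at h2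
      rw [hβ', show ((x : K) + y * α + w * β + v * (α * β)) * β =
        ((b * w : ℚ) : K) + ((b * v : ℚ) : K) * α + (x : ℚ) * β + (y : ℚ) * (α * β) by
          push_cast; linear_combination (w + v * α) * h.hb, h.trace_eq] at h3
      rw [map_mul (algebraMap (𝓞 K) K), hα', hβ', show ((x : K) + y * α + w * β + v * (α * β)) * (α * β) =
        ((a * b * v : ℚ) : K) + ((b * w : ℚ) : K) * α + ((a * y : ℚ) : K) * β + (x : ℚ) * (α * β) by
          push_cast; linear_combination (y * β + v * β ^ 2) * h.ha + (w * α + a * v) * h.hb,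
          h.trace_eq] at h4
      rw [FractionalIdeal.mem_one_iff]
      refine ⟨(m4 : 𝓞 K) + m3 * α' + m2 * β' + m1 * (α' * β'), ?_⟩
      have g1 : (4 : K) * x = (m1 : K) := by exact_mod_cast congrArg (fun q : ℚ => (q : K)) h1
      have g2 : (4 : K) * (a * y) = (m2 : K) := by
        exact_mod_cast congrArg (fun q : ℚ => (q : K)) h2
      have g3 : (4 : K) * (b * w) = (m3 : K) := by
        exact_mod_cast congrArg (fun q : ℚ => (q : K)) h3
      have g4 : (4 : K) * (a * b * v) = (m4 : K) := by
        exact_mod_cast congrArg (fun q : ℚ => (q : K)) h4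
      simp only [map_add, map_mul, hα', hβ', map_intCast, map_ofNat]
      rw [← g1, ← g2, ← g3, ← g4]
      linear_combination (-4 * (y * β + v * β ^ 2)) * h.ha + (-4 * (w * α + a * v)) * h.hb
    obtain ⟨t, ht, he⟩ := (FractionalIdeal.mem_coeIdeal _).1 this
    rwa [← FaithfulSMul.algebraMap_injective (𝓞 K) K he]
  have hdvd : (differentIdeal ℤ (𝓞 K)).absNorm ∣ (Algebra.norm ℤ (4 * α' * β')).natAbs := by
    rw [← Ideal.absNorm_span_singleton]
    apply Ideal.absNorm_dvd_absNorm_of_le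
    rw [Ideal.span_le]
    simpa using hmem
  rw [NumberField.absNorm_differentIdeal K] at hdvd
  have h4 : Algebra.norm ℤ (4 : 𝓞 K) = 256 := by
    have := Algebra.norm_algebraMap (R := ℤ) (S := 𝓞 K) 4
    rw [NumberField.RingOfIntegers.rank, h.fin] at this
    simpa using this
  rw [map_mul, map_mul, Int.natAbs_mul, Int.natAbs_mul, h.norm_α hα', h.symm.norm_α hβ', h4] at hdvd
  have ha0 := h.a_ne
  have hb0 := h.symm.a_ne
  refine Nat.le_of_dvd ?_ hdvd
  have := Int.natAbs_pos.2 ha0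
  have := Int.natAbs_pos.2 hb0
  change 0 < 256 * _ * _
  positivity

end BQ

theorem mem_biquad {a b : ℤ} {α β : ℂ} (hα : α ^ 2 = (a : ℂ)) (hβ : β ^ 2 = (b : ℂ)) (z : ℂ) :
    z ∈ biquad a b ↔ ∃ x y w v : ℚ, z = x + y * α + w * β + v * (α * β) := by
  have hαm : α ∈ biquad a b := IntermediateField.subset_adjoin _ _ (Or.inl hα)
  have hβm : β ∈ biquad a b := IntermediateField.subset_adjoin _ _ (Or.inr hβ)
  constructor
  · intro hz
    have halg : ∀ x ∈ {x : ℂ | x ^ 2 = (a : ℂ) ∨ x ^ 2 = (b : ℂ)}, IsAlgebraic ℚ x := by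
      intro x hx
      apply IsIntegral.isAlgebraic
      refine IsIntegral.of_pow (n := 2) (by norm_num) ?_
      rcases hx with hx | hx <;> rw [hx]
      · exact isIntegral_intCast a
      · exact isIntegral_intCast b
    have hz' : z ∈ Algebra.adjoin ℚ {x : ℂ | x ^ 2 = (a : ℂ) ∨ x ^ 2 = (b : ℂ)} := by
      rw [← IntermediateField.adjoin_toSubalgebra_of_isAlgebraic halg]
      exact hz
    induction hz' using Algebra.adjoin_induction with
    | mem x hx =>
      rcases hx with hx | hx
      · rw [← hα, sq_eq_sq_iff_eq_or_eq_neg] at hx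
        rcases hx with rfl | rfl
        · exact ⟨0, 1, 0, 0, by simp⟩
        · exact ⟨0, -1, 0, 0, by simp⟩
      · rw [← hβ, sq_eq_sq_iff_eq_or_eq_neg] at hx
        rcases hx with rfl | rfl
        · exact ⟨0, 0, 1, 0, by simp⟩
        · exact ⟨0, 0, -1, 0, by simp⟩
    | algebraMap r => exact ⟨r, 0, 0, 0, by simp⟩
    | add x y hx hy h1 h2 =>
      obtain ⟨x1, y1, w1, v1, rfl⟩ := h1 ((IntermediateField.algebra_adjoin_le_adjoin _ _) hx)
      obtain ⟨x2, y2, w2, v2, rfl⟩ := h2 ((IntermediateField.algebra_adjoin_le_adjoin _ _) hy)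
      exact ⟨x1 + x2, y1 + y2, w1 + w2, v1 + v2, by push_cast; ring⟩
    | mul x y hx hy h1 h2 =>
      obtain ⟨x1, y1, w1, v1, rfl⟩ := h1 ((IntermediateField.algebra_adjoin_le_adjoin _ _) hx)
      obtain ⟨x2, y2, w2, v2, rfl⟩ := h2 ((IntermediateField.algebra_adjoin_le_adjoin _ _) hy)
      refine ⟨x1 * x2 + a * y1 * y2 + b * w1 * w2 + a * b * v1 * v2,
        x1 * y2 + y1 * x2 + b * (w1 * v2 + v1 * w2),
        x1 * w2 + w1 * x2 + a * (y1 * v2 + v1 * y2),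
        x1 * v2 + v1 * x2 + y1 * w2 + w1 * y2, ?_⟩
      push_cast
      linear_combination (y1 * y2 + (y1 * v2 + v1 * y2) * β + v1 * v2 * β ^ 2) * hα +
        (w1 * w2 + (w1 * v2 + v1 * w2) * α + v1 * v2 * a) * hβ
  · rintro ⟨x, y, w, v, rfl⟩
    have hq : ∀ q : ℚ, (q : ℂ) ∈ biquad a b := fun q => by
      simp
    exact add_mem (add_mem (add_mem (hq _) (mul_mem (hq _) hαm)) (mul_mem (hq _) hβm))
      (mul_mem (hq _) (mul_mem hαm hβm))

theorem exists_bq {K : IntermediateField ℚ ℂ} [NumberField K] {a b : ℤ} (hK : K = biquad a b)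
    (hf : Module.finrank ℚ K = 4) : ∃ α β : K, BQ K a b α β := by
  obtain ⟨α, hα⟩ := IsAlgClosed.exists_pow_nat_eq (a : ℂ) (n := 2) (by norm_num)
  obtain ⟨β, hβ⟩ := IsAlgClosed.exists_pow_nat_eq (b : ℂ) (n := 2) (by norm_num)
  subst hK
  have hαm : α ∈ biquad a b := IntermediateField.subset_adjoin _ _ (Or.inl hα)
  have hβm : β ∈ biquad a b := IntermediateField.subset_adjoin _ _ (Or.inr hβ)
  refine ⟨⟨α, hαm⟩, ⟨β, hβm⟩, ?_, ?_, ?_, hf⟩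
  · apply Subtype.ext; simp [hα]
  · apply Subtype.ext; simp [hβ]
  · intro z
    obtain ⟨x, y, w, v, h⟩ := (mem_biquad hα hβ z).1 z.2
    exact ⟨x, y, w, v, Subtype.ext (by simpa using h)⟩

theorem finrank_biquad {a b : ℤ} (ha : ∀ r : ℚ, (a : ℚ) ≠ r ^ 2) (hb : ∀ r : ℚ, (b : ℚ) ≠ r ^ 2)
    (hab : ∀ r : ℚ, (b : ℚ) ≠ a * r ^ 2) : Module.finrank ℚ (biquad a b) = 4 := by
  obtain ⟨α, hα⟩ : ∃ α : ℂ, α ^ 2 = a := by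
    exact IsAlgClosed.exists_pow_nat_eq _ (by norm_num)
  obtain ⟨β, hβ⟩ : ∃ α : ℂ, α ^ 2 = b := by
    exact IsAlgClosed.exists_pow_nat_eq _ (by norm_num)
  have L1 : ∀ p q : ℚ, (p : ℂ) + q * α = 0 → p = 0 ∧ q = 0 := by
    intro p q h
    have hq : q = 0 := by
      by_contra hq
      have hq' : (q : ℂ) ≠ 0 := by exact_mod_cast hq
      apply ha (p / q)
      have h1 : (q : ℂ) ^ 2 * a = p ^ 2 := by
        rw [← hα]
        linear_combination (q * α - p) * h
      have h2 : q ^ 2 * (a : ℚ) = p ^ 2 := by exact_mod_cast h1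
      field_simp
      linarith
    subst hq
    simpa using h
  have L2 : ∀ x y w v : ℚ, (x : ℂ) + y * α + w * β + v * (α * β) = 0 →
      x = 0 ∧ y = 0 ∧ w = 0 ∧ v = 0 := by
    intro x y w v h
    by_cases hD : w ^ 2 - a * v ^ 2 = 0
    · have hv : v = 0 := by
        by_contra hv
        apply ha (w / v)
        field_simp
        linarith
      subst hv
      have hw : w = 0 := by simpa using hD
      subst hw
      have := L1 x y (by simpa using h)
      simp [this]
    · exfalso
      have e1 : ((w ^ 2 - a * v ^ 2 : ℚ) : ℂ) * β =
          ((a * y * v - x * w : ℚ) : ℂ) + ((x * v - y * w : ℚ) : ℂ) * α := by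
        push_cast
        linear_combination (w - v * α) * h + (v ^ 2 * β + y * v) * hα
      generalize w ^ 2 - a * v ^ 2 = D at *
      generalize a * y * v - x * w = P at *
      generalize x * v - y * w = Q at *
      obtain ⟨e2, e3⟩ := L1 (P ^ 2 + a * Q ^ 2 - D ^ 2 * b) (2 * (P * Q)) (by
        push_cast
        linear_combination (-(D * β) - (P + Q * α)) * e1 + D ^ 2 * hβ - Q ^ 2 * hα)
      have e4 : P * Q = 0 := by linarith
      rcases mul_eq_zero.1 e4 with rfl | rfl
      · apply hab (Q / D)
        field_simp
        linarith
      · apply hb (P / D)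
        field_simp
        linarith
  have hli : LinearIndependent ℚ ![(1 : ℂ), α, β, α * β] := by
    rw [Fintype.linearIndependent_iff]
    intro g hg
    have := L2 (g 0) (g 1) (g 2) (g 3) (by
      simpa [Fin.sum_univ_four, Algebra.smul_def] using hg)
    intro i
    fin_cases i
    · exact this.1
    · exact this.2.1
    · exact this.2.2.1
    · exact this.2.2.2
  have hspan : Subalgebra.toSubmodule (biquad a b).toSubalgebra =
      Submodule.span ℚ (Set.range ![(1 : ℂ), α, β, α * β]) := by
    ext z
    rw [Submodule.mem_span_range_iff_exists_fun]
    change z ∈ biquad a b ↔ _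
    rw [mem_biquad hα hβ]
    constructor
    · rintro ⟨x, y, w, v, rfl⟩
      refine ⟨![x, y, w, v], ?_⟩
      simp [Fin.sum_univ_four, Algebra.smul_def]
    · rintro ⟨g, rfl⟩
      refine ⟨g 0, g 1, g 2, g 3, ?_⟩
      simp [Fin.sum_univ_four, Algebra.smul_def]
  have h1 := finrank_span_eq_card hli
  rw [← hspan] at h1
  simpa using h1

theorem absDisc_eq (K : IntermediateField ℚ ℂ) [NumberField K] :
    absDisc K = (NumberField.discr K).natAbs := by
  unfold absDisc
  rw [dif_pos (inferInstance : FiniteDimensional ℚ K)]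

theorem nf_of_finrank {K : IntermediateField ℚ ℂ} (h : Module.finrank ℚ K = 4) : NumberField K := by
  have : FiniteDimensional ℚ K := Module.finite_of_finrank_pos (by omega)
  exact ⟨⟩

theorem finite_family (X : ℝ) : {K : IntermediateField ℚ ℂ | K ∈ biquadFamily ∧
    (absDisc K : ℝ) ≤ X}.Finite := by
  have h := (NumberField.finite_of_discr_bdd ℂ ⌊X⌋₊).image (fun K => K.1)
  refine h.subset ?_
  rintro K ⟨⟨a, b, -, -, -, -, hf, -⟩, hX⟩
  have := nf_of_finrank hf
  refine ⟨⟨K, inferInstance⟩, ?_, rfl⟩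
  rw [absDisc_eq] at hX
  have h2 := Nat.le_floor hX
  have h3 : |NumberField.discr K| = ((NumberField.discr K).natAbs : ℤ) := Int.abs_eq_natAbs _
  show |NumberField.discr K| ≤ _
  rw [h3]
  exact_mod_cast h2

/-- integers whose absolute value divides `n` -/
def signedDiv (n : ℕ) : Finset ℤ :=
  (n.divisors.image fun d : ℕ => (d : ℤ)) ∪ (n.divisors.image fun d : ℕ => -(d : ℤ))

theorem mem_signedDiv {n : ℕ} (hn : n ≠ 0) {a : ℤ} (h : a.natAbs ∣ n) : a ∈ signedDiv n := by
  unfold signedDiv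
  rw [Finset.mem_union, Finset.mem_image, Finset.mem_image]
  have hm : a.natAbs ∈ n.divisors := Nat.mem_divisors.2 ⟨h, hn⟩
  rcases Int.natAbs_eq a with h | h
  · exact Or.inl ⟨_, hm, h.symm⟩
  · exact Or.inr ⟨_, hm, h.symm⟩

theorem card_signedDiv (n : ℕ) : (signedDiv n).card ≤ 2 * n.divisors.card := by
  unfold signedDiv
  refine (Finset.card_union_le _ _).trans ?_
  have h1 := Finset.card_image_le (s := n.divisors) (f := fun d : ℕ => (d : ℤ))
  have h2 := Finset.card_image_le (s := n.divisors) (f := fun d : ℕ => -(d : ℤ))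
  omega

theorem card_divisors_lcm (m n : ℕ) (hn : n ≠ 0) :
    (Nat.lcm m n).divisors.card ≤ m.divisors.card * n.divisors.card := by
  have : Nat.lcm m n = m * (n / Nat.gcd m n) := by
    rw [Nat.lcm, Nat.mul_div_assoc _ (Nat.gcd_dvd_right m n)]
  rw [this, Nat.divisors_mul]
  refine Finset.card_mul_le.trans ?_
  apply Nat.mul_le_mul_left
  apply Finset.card_le_card
  exact Nat.divisors_subset_of_dvd hn (Nat.div_dvd_of_dvd (Nat.gcd_dvd_right m n))

theorem countSE_le (X : ℝ) (hX : 1 ≤ X) : (countSE X : ℝ) ≤ (2 ^ 32 : ℕ) * Real.sqrt X := by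
  set N : ℕ := ⌊Real.sqrt X⌋₊ with hN
  have hN1 : 1 ≤ N := Nat.le_floor (by simpa using Real.one_le_sqrt.2 hX)
  let S : Finset (IntermediateField ℚ ℂ) :=
    ((Finset.Icc 1 N).filter fun n => n.divisors.card ≤ 2 ^ 14).biUnion fun n =>
      (signedDiv n ×ˢ signedDiv n).image fun q => biquad q.1 q.2
  have hsub : {K : IntermediateField ℚ ℂ | K ∈ biquadFamily ∧ HasEuclideanIdeal K ∧
      (absDisc K : ℝ) ≤ X} ⊆ (S : Set (IntermediateField ℚ ℂ)) := by
    rintro K ⟨⟨a, b, -, -, ha, hb, hf, hK⟩, ⟨hfd, C, hC⟩, hX'⟩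
    have hnf := nf_of_finrank hf
    obtain ⟨α, β, h⟩ := exists_bq hK hf
    have hcyc := euclid_mem_zpowers hC
    have d1 := h.card_divisors_le ha hcyc
    have d2 := h.symm.card_divisors_le hb hcyc
    have ha0 : a.natAbs ≠ 0 := Int.natAbs_ne_zero.2 h.a_ne
    have hb0 : b.natAbs ≠ 0 := Int.natAbs_ne_zero.2 h.symm.a_ne
    have hl0 : Nat.lcm a.natAbs b.natAbs ≠ 0 := Nat.lcm_ne_zero ha0 hb0
    rw [absDisc_eq] at hX'
    have hdvd : (Nat.lcm a.natAbs b.natAbs) ^ 2 ∣ (NumberField.discr K).natAbs := by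
      rw [← Nat.pow_lcm_pow]
      exact Nat.lcm_dvd (h.sq_dvd_discr ha) (h.symm.sq_dvd_discr hb)
    have hle := Nat.le_of_dvd (Int.natAbs_pos.2 (NumberField.discr_ne_zero K)) hdvd
    have hle2 : (Nat.lcm a.natAbs b.natAbs : ℝ) ≤ Real.sqrt X := by
      apply Real.le_sqrt_of_sq_le
      refine le_trans ?_ hX'
      exact_mod_cast hle
    have hleN : Nat.lcm a.natAbs b.natAbs ≤ N := Nat.le_floor hle2
    simp only [S, Finset.coe_biUnion, Set.mem_iUnion, Finset.mem_coe, Finset.mem_filter,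
      Finset.mem_Icc]
    refine ⟨Nat.lcm a.natAbs b.natAbs, ⟨⟨Nat.pos_of_ne_zero hl0, hleN⟩, ?_⟩, ?_⟩
    · refine (card_divisors_lcm _ _ hb0).trans ((Nat.mul_le_mul d1 d2).trans (by norm_num))
    · rw [Finset.mem_image]
      exact ⟨(a, b), Finset.mem_product.2 ⟨mem_signedDiv hl0 (Nat.dvd_lcm_left _ _),
        mem_signedDiv hl0 (Nat.dvd_lcm_right _ _)⟩, hK.symm⟩
  have hcard : countSE X ≤ S.card := by
    have := Set.ncard_le_ncard hsub S.finite_toSet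
    rwa [Set.ncard_coe_finset] at this
  have hS : S.card ≤ N * 2 ^ 30 := by
    refine (Finset.card_biUnion_le_card_mul _ _ (2 ^ 30) ?_).trans ?_
    · intro n hn
      have hn' := (Finset.mem_filter.1 hn).2
      refine Finset.card_image_le.trans ?_
      rw [Finset.card_product]
      have := card_signedDiv n
      have h2 : (signedDiv n).card ≤ 2 ^ 15 := by omega
      calc _ ≤ 2 ^ 15 * 2 ^ 15 := Nat.mul_le_mul h2 h2
        _ = 2 ^ 30 := by norm_num
    · apply Nat.mul_le_mul_right
      refine (Finset.card_filter_le _ _).trans ?_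
      simp
  have h1 : (countSE X : ℝ) ≤ (N : ℝ) * 2 ^ 30 := by exact_mod_cast hcard.trans hS
  have h2 : (N : ℝ) ≤ Real.sqrt X := Nat.floor_le (Real.sqrt_nonneg X)
  have h3 := Real.sqrt_nonneg X
  push_cast
  nlinarith

/-- auxiliary set of odd squarefree numbers prime to `p` -/
def goodB (p M : ℕ) : Finset ℕ :=
  (Finset.Ioc 0 M).filter fun b => Odd b ∧ Squarefree b ∧ ¬ p ∣ b

theorem sum_inv_odd_sq (M : ℕ) :
    ∑ k ∈ Finset.range M, (1 : ℝ) / (2 * ((k : ℝ) + 1) + 1) ^ 2 ≤ 1 / 4 - 1 / (4 * ((M : ℝ) + 1)) := by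
  induction M with
  | zero => simp
  | succ n ih =>
    rw [Finset.sum_range_succ]
    have : (1 : ℝ) / (2 * ((n : ℝ) + 1) + 1) ^ 2 ≤
        1 / (4 * ((n : ℝ) + 1)) - 1 / (4 * (((n + 1 : ℕ) : ℝ) + 1)) := by
      push_cast
      rw [div_sub_div _ _ (by positivity) (by positivity), div_le_div_iff₀ (by positivity)
        (by positivity)]
      have : (0 : ℝ) ≤ n := Nat.cast_nonneg n
      nlinarith
    linarith

theorem card_goodB (p M : ℕ) (hp : 11 ≤ p) : (M : ℝ) / 8 ≤ (goodB p M).card := by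
  have hsub : Finset.Ioc 0 M ⊆ goodB p M ∪ ((Finset.Ioc 0 M).filter (2 ∣ ·)) ∪
      ((Finset.Ioc 0 M).filter (p ∣ ·)) ∪ (Finset.range M).biUnion fun k =>
        (Finset.Ioc 0 M).filter ((2 * (k + 1) + 1) ^ 2 ∣ ·) := by
    intro b hb
    simp only [Finset.mem_union, Finset.mem_biUnion, Finset.mem_filter, goodB, hb, true_and,
      Finset.mem_range]
    by_contra hcon
    push Not at hcon
    obtain ⟨⟨⟨h1, h2⟩, h3⟩, h4⟩ := hcon
    have hodd : Odd b := by
      rw [← Nat.not_even_iff_odd, even_iff_two_dvd]; exact h2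
    have hsf : ¬ Squarefree b := fun hs => h3 (h1 hodd hs)
    apply hsf
    intro x hx
    have hxo : Odd x := by
      have : x ∣ b := (Dvd.intro _ rfl).trans hx
      exact Odd.of_dvd_nat hodd this
    obtain ⟨k, rfl⟩ := hxo
    rcases k with _ | k
    · simp
    · exfalso
      have hbM := Finset.mem_Ioc.1 hb
      have hle := Nat.le_of_dvd hbM.1 hx
      refine h4 k ?_ (by rwa [sq])
      nlinarith
  have hc := Finset.card_le_card hsub
  have h1 := (Finset.card_union_le (goodB p M ∪ ((Finset.Ioc 0 M).filter (2 ∣ ·)) ∪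
      ((Finset.Ioc 0 M).filter (p ∣ ·))) ((Finset.range M).biUnion fun k =>
        (Finset.Ioc 0 M).filter ((2 * (k + 1) + 1) ^ 2 ∣ ·)))
  have h2 := (Finset.card_union_le (goodB p M ∪ ((Finset.Ioc 0 M).filter (2 ∣ ·)))
      ((Finset.Ioc 0 M).filter (p ∣ ·)))
  have h3 := (Finset.card_union_le (goodB p M) ((Finset.Ioc 0 M).filter (2 ∣ ·)))
  have h4 : ((Finset.range M).biUnion fun k =>
        (Finset.Ioc 0 M).filter ((2 * (k + 1) + 1) ^ 2 ∣ ·)).card ≤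
        ∑ k ∈ Finset.range M, M / (2 * (k + 1) + 1) ^ 2 := by
    refine Finset.card_biUnion_le.trans (Finset.sum_le_sum fun k _ => ?_)
    rw [Nat.Ioc_filter_dvd_card_eq_div]
  rw [Nat.Ioc_filter_dvd_card_eq_div] at h2 h3
  rw [Nat.card_Ioc] at hc
  have h5 : ((∑ k ∈ Finset.range M, M / (2 * (k + 1) + 1) ^ 2 : ℕ) : ℝ) ≤ (M : ℝ) / 4 := by
    rw [Nat.cast_sum]
    calc _ ≤ ∑ k ∈ Finset.range M, (M : ℝ) * (1 / (2 * ((k : ℝ) + 1) + 1) ^ 2) := by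
          refine Finset.sum_le_sum fun k _ => ?_
          refine Nat.cast_div_le.trans (le_of_eq ?_)
          push_cast
          ring
      _ = (M : ℝ) * ∑ k ∈ Finset.range M, (1 : ℝ) / (2 * ((k : ℝ) + 1) + 1) ^ 2 := by rw [Finset.mul_sum]
      _ ≤ (M : ℝ) * (1 / 4) := by
          apply mul_le_mul_of_nonneg_left _ (Nat.cast_nonneg M)
          have := sum_inv_odd_sq M
          have h : (0 : ℝ) ≤ 1 / (4 * ((M : ℝ) + 1)) := by positivity
          linarith
      _ = (M : ℝ) / 4 := by ring
  have h6 : ((M / p : ℕ) : ℝ) ≤ (M : ℝ) / 11 := by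
    refine Nat.cast_div_le.trans ?_
    apply div_le_div_of_nonneg_left (Nat.cast_nonneg M) (by norm_num)
    exact_mod_cast hp
  have h7 : ((M / 2 : ℕ) : ℝ) ≤ (M : ℝ) / 2 := by
    refine Nat.cast_div_le.trans (le_of_eq (by simp))
  have h8 : M ≤ (goodB p M).card + M / 2 + M / p +
      ∑ k ∈ Finset.range M, M / (2 * (k + 1) + 1) ^ 2 := by omega
  have h9 : (M : ℝ) ≤ (goodB p M).card + (M / 2 : ℕ) + (M / p : ℕ) +
      ((∑ k ∈ Finset.range M, M / (2 * (k + 1) + 1) ^ 2 : ℕ) : ℝ) := by exact_mod_cast h8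
  have : (0 : ℝ) ≤ M := Nat.cast_nonneg M
  linarith

theorem prime_sum (B : ℝ) : ∃ A : ℕ,
    B ≤ ∑ p ∈ (Finset.range (A + 1)).filter (fun p => p.Prime ∧ 11 ≤ p), (1 : ℝ) / p := by
  have h := not_summable_one_div_on_primes
  rw [not_summable_iff_tendsto_nat_atTop_of_nonneg (fun n => by
    apply Set.indicator_nonneg; intro x _; positivity)] at h
  obtain ⟨A, hA⟩ := (h.eventually_ge_atTop (B + 11)).exists
  refine ⟨A, ?_⟩
  have h1 : ∀ n : ℕ, Set.indicator {p : ℕ | p.Prime} (fun n : ℕ => (1 : ℝ) / n) n ≤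
      (if n.Prime ∧ 11 ≤ n then (1 : ℝ) / n else 0) + (if n < 11 then 1 else 0) := by
    intro n
    by_cases hn : n.Prime
    · rw [Set.indicator_of_mem (by exact hn)]
      by_cases h11 : n < 11
      · have hpos : (1 : ℝ) ≤ n := by exact_mod_cast hn.one_lt.le
        have : (1 : ℝ) / n ≤ 1 := by rw [div_le_one (by linarith)]; exact hpos
        simp [h11, show ¬ 11 ≤ n by omega]
        simpa using this
      · simp [hn, h11, show 11 ≤ n by omega]
    · rw [Set.indicator_of_notMem (by exact hn)]
      simp only [hn, false_and, if_false]
      split_ifs <;> norm_num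
  have h2 := Finset.sum_le_sum (s := Finset.range A) (fun n _ => h1 n)
  rw [Finset.sum_add_distrib, ← Finset.sum_filter, ← Finset.sum_filter] at h2
  have h3 : ∑ n ∈ (Finset.range A).filter (· < 11), (1 : ℝ) ≤ 11 := by
    rw [Finset.sum_const, nsmul_eq_mul, mul_one]
    have : ((Finset.range A).filter (· < 11)).card ≤ (Finset.range 11).card := by
      apply Finset.card_le_card
      intro x hx
      simpa using (Finset.mem_filter.1 hx).2
    rw [Finset.card_range] at this
    exact_mod_cast this
  have h4 : ∑ p ∈ (Finset.range A).filter (fun p => p.Prime ∧ 11 ≤ p), (1 : ℝ) / p ≤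
      ∑ p ∈ (Finset.range (A + 1)).filter (fun p => p.Prime ∧ 11 ≤ p), (1 : ℝ) / p := by
    apply Finset.sum_le_sum_of_subset_of_nonneg
    · apply Finset.filter_subset_filter
      exact Finset.range_mono (Nat.le_succ A)
    · intros; positivity
  linarith


theorem pb_finrank {p b : ℕ} (hp : p.Prime) (hb : Squarefree b) (hb1 : 1 < b) (hpb : ¬ p ∣ b) :
    Module.finrank ℚ (biquad (p : ℤ) (b : ℤ)) = 4 := by
  apply finrank_biquad
  · intro r hr
    have := eq_of_mul_sq (d := p) (e := 1) hp.squarefree squarefree_one (r := r)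
      (by push_cast at hr ⊢; linarith)
    exact hp.one_lt.ne' this
  · intro r hr
    have := eq_of_mul_sq (d := b) (e := 1) hb squarefree_one (r := r)
      (by push_cast at hr ⊢; linarith)
    omega
  · intro r hr
    have := eq_of_mul_sq (d := p) (e := b) hp.squarefree hb (r := p * r)
      (by push_cast at hr ⊢; rw [hr]; ring)
    exact hpb (this ▸ dvd_rfl)

theorem sq_in_pb {p b d : ℕ} (hp : p.Prime) (hb : Squarefree b) (hb1 : 1 < b) (hpb : ¬ p ∣ b)
    (hd : Squarefree d) {z : ℂ} (hz : z ^ 2 = (d : ℂ)) (hzm : z ∈ biquad (p : ℤ) (b : ℤ)) :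
    d = 1 ∨ d = p ∨ d = b ∨ d = p * b := by
  have hf := pb_finrank hp hb hb1 hpb
  haveI := nf_of_finrank hf
  obtain ⟨α, β, h⟩ := exists_bq (K := biquad (p : ℤ) (b : ℤ)) rfl hf
  have hz' : (⟨z, hzm⟩ : biquad (p : ℤ) (b : ℤ)) ^ 2 = ((d : ℚ) : biquad (p : ℤ) (b : ℤ)) := by
    apply Subtype.ext
    push_cast
    simpa using hz
  have hpbs : Squarefree (p * b) :=
    (Nat.squarefree_mul ((Nat.Prime.coprime_iff_not_dvd hp).2 hpb)).2 ⟨hp.squarefree, hb⟩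
  obtain ⟨r, hr | hr | hr | hr⟩ := h.sq_in hz'
  · left
    exact eq_of_mul_sq hd squarefree_one (r := r) (by push_cast; linarith)
  · right; left
    exact eq_of_mul_sq hd hp.squarefree (r := p * r) (by push_cast at hr ⊢; rw [hr]; ring)
  · right; right; left
    exact eq_of_mul_sq hd hb (r := b * r) (by push_cast at hr ⊢; rw [hr]; ring)
  · right; right; right
    exact eq_of_mul_sq hd hpbs (r := p * b * r) (by push_cast at hr ⊢; rw [hr]; ring)

theorem pb_inj {A p b p' b' : ℕ} (hp : p.Prime) (hb : Squarefree b) (hpb : ¬ p ∣ b)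
    (hp' : p'.Prime) (hb' : Squarefree b') (hpb' : ¬ p' ∣ b')
    (hpA : p ≤ A) (hbA : A < b) (hpA' : p' ≤ A) (hbA' : A < b')
    (h : biquad (p : ℤ) (b : ℤ) = biquad (p' : ℤ) (b' : ℤ)) : p = p' ∧ b = b' := by
  have h1 := hp.one_lt
  have h1' := hp'.one_lt
  obtain ⟨α, hα⟩ := IsAlgClosed.exists_pow_nat_eq (p' : ℂ) (n := 2) (by norm_num)
  obtain ⟨β, hβ⟩ := IsAlgClosed.exists_pow_nat_eq (b' : ℂ) (n := 2) (by norm_num)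
  have hαm : α ∈ biquad (p' : ℤ) (b' : ℤ) :=
    IntermediateField.subset_adjoin _ _ (Or.inl (by push_cast; exact hα))
  have hβm : β ∈ biquad (p' : ℤ) (b' : ℤ) :=
    IntermediateField.subset_adjoin _ _ (Or.inr (by push_cast; exact hβ))
  rw [← h] at hαm hβm
  have e1 := sq_in_pb hp hb (by omega) hpb hp'.squarefree hα hαm
  have e2 := sq_in_pb hp hb (by omega) hpb hb' hβ hβm
  have hpp : p' = p := by
    rcases e1 with e | e | e | e
    · omega
    · exact e
    · omega
    · exfalso
      have : b ≤ p * b := Nat.le_mul_of_pos_left _ (by omega)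
      omega
  subst hpp
  refine ⟨rfl, ?_⟩
  rcases e2 with e | e | e | e
  · omega
  · omega
  · exact e.symm
  · exact absurd (e ▸ Dvd.intro _ rfl) hpb'

theorem pb_mem {X : ℝ} {N p b : ℕ} (hp : p.Prime) (hp2 : 11 ≤ p) (hb : Squarefree b) (hbo : Odd b)
    (hb1 : 1 < b) (hpb : ¬ p ∣ b) (hN : p * b ≤ N) (hX : 256 * (N : ℝ) ^ 2 ≤ X) :
    biquad (p : ℤ) (b : ℤ) ∈ {K : IntermediateField ℚ ℂ | K ∈ biquadFamily ∧
      (absDisc K : ℝ) ≤ X} := by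
  have hf := pb_finrank hp hb hb1 hpb
  haveI := nf_of_finrank hf
  obtain ⟨α, β, h⟩ := exists_bq (K := biquad (p : ℤ) (b : ℤ)) rfl hf
  refine ⟨⟨p, b, ?_, ?_, ?_, ?_, hf, rfl⟩, ?_⟩
  · exact_mod_cast hp.odd_of_ne_two (by omega)
  · exact_mod_cast hbo
  · exact Int.squarefree_natCast.2 hp.squarefree
  · exact Int.squarefree_natCast.2 hb
  · rw [absDisc_eq]
    have h1 := h.discr_le
    simp only [Int.natAbs_natCast] at h1
    have h2 : 256 * p ^ 2 * b ^ 2 ≤ 256 * N ^ 2 := by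
      have := Nat.pow_le_pow_left hN 2
      rw [mul_pow] at this
      nlinarith
    have h3 : ((NumberField.discr (biquad (p : ℤ) (b : ℤ))).natAbs : ℝ) ≤ 256 * (N : ℝ) ^ 2 := by
      exact_mod_cast h1.trans h2
    exact h3.trans hX

theorem card_T_le {X : ℝ} {N A : ℕ} (hX : 256 * (N : ℝ) ^ 2 ≤ X) (hA : 1 ≤ A) :
    (((Finset.range (A + 1)).filter (fun p => p.Prime ∧ 11 ≤ p)).sigma
      (fun p => (goodB p (N / p)).filter (A < ·))).card ≤ countS X := by
  have hfin := finite_family X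
  have e : countS X = hfin.toFinset.card := by
    rw [← Set.ncard_eq_toFinset_card _ hfin]
    rfl
  rw [e]
  apply Finset.card_le_card_of_injOn (fun q => biquad (q.1 : ℤ) (q.2 : ℤ))
  · rintro ⟨p, b⟩ hq
    simp only [Finset.coe_sigma, Set.mem_sigma_iff, Finset.mem_coe, Finset.mem_filter,
      Finset.mem_range, goodB, Finset.mem_Ioc] at hq
    obtain ⟨⟨h1, h2, h3⟩, ⟨⟨h4, h5⟩, h6, h7, h8⟩, h9⟩ := hq
    simp only [Finset.mem_coe, Set.Finite.mem_toFinset]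
    refine pb_mem h2 h3 h7 h6 (by omega) h8 ?_ hX
    calc p * b ≤ p * (N / p) := Nat.mul_le_mul_left _ h5
      _ ≤ N := Nat.mul_div_le N p
  · rintro ⟨p, b⟩ hq ⟨p', b'⟩ hq' hEq
    simp only [Finset.coe_sigma, Set.mem_sigma_iff, Finset.mem_coe, Finset.mem_filter,
      Finset.mem_range, goodB, Finset.mem_Ioc] at hq hq'
    obtain ⟨⟨h1, h2, h3⟩, ⟨⟨h4, h5⟩, h6, h7, h8⟩, h9⟩ := hq
    obtain ⟨⟨h1', h2', h3'⟩, ⟨⟨h4', h5'⟩, h6', h7', h8'⟩, h9'⟩ := hq'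
    obtain ⟨rfl, rfl⟩ := pb_inj h2 h7 h8 h2' h7' h8' (by omega) h9 (by omega) h9' hEq
    rfl

theorem card_T_ge (N A : ℕ) :
    (N : ℝ) / 8 * (∑ p ∈ (Finset.range (A + 1)).filter (fun p => p.Prime ∧ 11 ≤ p), (1 : ℝ) / p) -
      (A + 1 : ℝ) * (A + 1) ≤
    ((((Finset.range (A + 1)).filter (fun p => p.Prime ∧ 11 ≤ p)).sigma
      (fun p => (goodB p (N / p)).filter (A < ·))).card : ℝ) := by
  rw [Finset.card_sigma, Nat.cast_sum]
  set P := (Finset.range (A + 1)).filter (fun p => p.Prime ∧ 11 ≤ p) with hP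
  have hc : (P.card : ℝ) ≤ A + 1 := by
    have : P.card ≤ A + 1 := by
      simpa using Finset.card_filter_le (Finset.range (A + 1)) (fun p => p.Prime ∧ 11 ≤ p)
    exact_mod_cast this
  have key : ∀ p ∈ P, (N : ℝ) / 8 * ((1 : ℝ) / p) - (A + 1) ≤
      (((goodB p (N / p)).filter (A < ·)).card : ℝ) := by
    intro p hp
    obtain ⟨h1, h2, h3⟩ := Finset.mem_filter.1 hp
    have c1 := card_goodB p (N / p) h3
    have c2 : (goodB p (N / p)).card ≤ ((goodB p (N / p)).filter (A < ·)).card + A := by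
      rw [← Finset.card_filter_add_card_filter_not (s := goodB p (N / p)) (A < ·)]
      apply Nat.add_le_add_left
      calc _ ≤ (Finset.Ioc 0 A).card := by
            apply Finset.card_le_card
            intro b hb
            simp only [Finset.mem_filter, goodB, Finset.mem_Ioc, not_lt] at hb ⊢
            exact ⟨hb.1.1.1, hb.2⟩
        _ = A := by simp
    have c2' : ((goodB p (N / p)).card : ℝ) ≤ ((goodB p (N / p)).filter (A < ·)).card + A := by
      exact_mod_cast c2
    have c3 : (N : ℝ) * (1 / p) ≤ (N / p : ℕ) + 1 := by
      have hp0 : (0 : ℝ) < p := by exact_mod_cast h2.pos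
      rw [mul_one_div, div_le_iff₀ hp0]
      have := (Nat.lt_mul_div_succ N h2.pos).le
      have h' : (N : ℝ) ≤ (p * (N / p + 1) : ℕ) := by exact_mod_cast this
      rw [Nat.cast_mul] at h'
      push_cast at h' ⊢
      linarith
    linarith
  have := Finset.sum_le_sum key
  rw [Finset.sum_sub_distrib, ← Finset.mul_sum, Finset.sum_const, nsmul_eq_mul] at this
  have h2 : (P.card : ℝ) * (A + 1) ≤ (A + 1 : ℝ) * (A + 1) :=
    mul_le_mul_of_nonneg_right hc (by positivity)
  linarith

theorem countS_ge (M : ℝ) (hM : 0 < M) : ∀ᶠ X : ℝ in atTop, M * Real.sqrt X ≤ countS X := by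
  obtain ⟨A₀, hA₀⟩ := prime_sum (128 * (M + 1))
  have hA1 : 1 ≤ A₀ := by
    by_contra hcon
    have : A₀ = 0 := by omega
    subst this
    have : (Finset.range (0 + 1)).filter (fun p => p.Prime ∧ 11 ≤ p) = ∅ := by
      ext x
      simp only [Finset.mem_filter, Finset.mem_range, Finset.notMem_empty, iff_false]
      omega
    rw [this, Finset.sum_empty] at hA₀
    linarith
  filter_upwards [Filter.eventually_ge_atTop (0 : ℝ), Filter.eventually_ge_atTop
    ((16 * (M + 1) + (A₀ + 1) * (A₀ + 1) : ℝ) ^ 2)] with X hX0 hX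
  set s := Real.sqrt X with hs
  have hs2 : s ^ 2 = X := Real.sq_sqrt hX0
  have hsge : 16 * (M + 1) + (A₀ + 1) * (A₀ + 1) ≤ s := Real.le_sqrt_of_sq_le hX
  have hs0 : 0 ≤ s := Real.sqrt_nonneg X
  set N := ⌊s / 16⌋₊ with hN
  have hN1 : (N : ℝ) ≤ s / 16 := Nat.floor_le (by positivity)
  have hN2 : s / 16 < N + 1 := Nat.lt_floor_add_one _
  have hXN : 256 * (N : ℝ) ^ 2 ≤ X := by
    have : (N : ℝ) ^ 2 ≤ (s / 16) ^ 2 := pow_le_pow_left₀ (Nat.cast_nonneg N) hN1 2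
    rw [← hs2]
    nlinarith
  have h1 := (Nat.cast_le (α := ℝ)).2 (card_T_le (N := N) hXN hA1)
  have h2 := card_T_ge N A₀
  have h3 : (N : ℝ) / 8 * (128 * (M + 1)) ≤ (N : ℝ) / 8 * (∑ p ∈ (Finset.range (A₀ + 1)).filter
      (fun p => p.Prime ∧ 11 ≤ p), (1 : ℝ) / p) :=
    mul_le_mul_of_nonneg_left hA₀ (by positivity)
  have h4 : (s / 16 - 1) * (16 * (M + 1)) ≤ N * (16 * (M + 1)) :=
    mul_le_mul_of_nonneg_right (by linarith) (by linarith)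
  nlinarith

theorem stmt19 :
    Tendsto (fun X : ℝ => (countSE X : ℝ) / (countS X : ℝ)) atTop (nhds 0) := by
  rw [Metric.tendsto_nhds]
  intro ε hε
  have hM : (0 : ℝ) < ((2 ^ 32 : ℕ) : ℝ) / ε + 1 := by positivity
  filter_upwards [countS_ge _ hM, Filter.eventually_ge_atTop (1 : ℝ)] with X h1 hX
  have h2 := countSE_le X hX
  have hs : 0 < Real.sqrt X := Real.sqrt_pos.2 (by linarith)
  have hpos : (0 : ℝ) < countS X := lt_of_lt_of_le (by positivity) h1
  rw [Real.dist_eq, sub_zero, abs_of_nonneg (by positivity), div_lt_iff₀ hpos]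
  refine lt_of_le_of_lt h2 ?_
  calc ((2 ^ 32 : ℕ) : ℝ) * Real.sqrt X < (((2 ^ 32 : ℕ) : ℝ) + ε) * Real.sqrt X := by
        apply mul_lt_mul_of_pos_right _ hs
        linarith
    _ = ε * ((((2 ^ 32 : ℕ) : ℝ) / ε + 1) * Real.sqrt X) := by
        field_simp
    _ ≤ ε * countS X := mul_le_mul_of_nonneg_left h1 hε.le
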